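/- arXiv:1906.00020 — 2 statements merged into one kernel-verified Lean document; each statement's English description precedes it below -/
import Mathlib

section
/- Suppose m > 0 has k-sandwiching sequence (A_{a_i} b_i)_{i=1}^n with sandwiching values (m_i)_{i=0}^n, and suppose w and j with 1 ≤ j ≤ n satisfy A_{a_j} b_j ≤ w < A_{a_j}(b_j + 1). Then (A_{a_i} b_i)_{i=1}^j is an initial segment of the k-sandwiching sequence of w. If moreover A_0 m_j > w, then (A_{a_i} b_i)_{i=1}^j is the full k-sandwiching sequence of w, and hence w ≡_k A_{a_j} b_j + c where c = w − A_{a_j} b_j. -/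
/-- The base-`k` Ackermann function `A_a(k, b)`:
`A_0(k, b) = k ^ b` and `A_{a+1}(k, b) = A_a^k(k, A_{a+1}(k, b-1))`,
with the auxiliary value `A_{a+1}(k, -1) = 1`
(equivalently, `A_{a+1}(k, b) = (A_a^k)^[b+1] (1)`). -/
def Ack (k : ℕ) : ℕ → ℕ → ℕ
  | 0, b => k ^ b
  | a + 1, b => ((Ack k a)^[k])^[b + 1] 1

/-- `IsSandwich k m n a b ms` says that `(A_{a i}(k, b i))_{i=1}^n` is a
`k`-sandwiching sequence for `m`, with sandwiching values `(ms i)_{i=0}^n`: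
`ms 0 = 0`; for each `i < n`, `A_{a (i+1)} (ms i) ≤ m < A_{a (i+1) + 1} (ms i)`,
`A_{a (i+1)} (b (i+1)) ≤ m < A_{a (i+1)} (b (i+1) + 1)`, and
`ms (i+1) = A_{a (i+1)} (b (i+1))`; and `A_0 (ms n) > m`. -/
structure IsSandwich (k m n : ℕ) (a b ms : ℕ → ℕ) : Prop where
  ms_zero : ms 0 = 0
  idx_lo : ∀ i < n, Ack k (a (i + 1)) (ms i) ≤ m
  idx_hi : ∀ i < n, m < Ack k (a (i + 1) + 1) (ms i)
  arg_lo : ∀ i < n, Ack k (a (i + 1)) (b (i + 1)) ≤ m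
  arg_hi : ∀ i < n, m < Ack k (a (i + 1)) (b (i + 1) + 1)
  ms_succ : ∀ i < n, ms (i + 1) = Ack k (a (i + 1)) (b (i + 1))
  halt : m < Ack k 0 (ms n)

/-- `NF k m a b c` says that `m ≡_k A_a b + c`, i.e. `m` has `k`-normal form
`A_a b + c` (so `m = A_a b + c` and the `k`-sandwiching sequence of `m` ends
with the pair `(a, b)`). -/
def NF (k m a b c : ℕ) : Prop :=
  m = Ack k a b + c ∧
    ∃ n as bs ms, 1 ≤ n ∧ IsSandwich k m n as bs ms ∧ a = as n ∧ b = bs n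

theorem ack_succ_eq (k a x : ℕ) :
    Ack k (a + 1) x = (Ack k a)^[k] (((Ack k a)^[k])^[x] 1) := by
  rw [← Function.iterate_succ_apply' ((Ack k a)^[k]) x 1]
  simp [Ack]

theorem iter_gt (f : ℕ → ℕ) (h : ∀ x, x < f x) (n x : ℕ) : x + n ≤ f^[n] x := by
  induction n with
  | zero => simp
  | succ n ih =>
    rw [Function.iterate_succ_apply']
    have := h (f^[n] x)
    omega

theorem ack_aux (k : ℕ) (hk : 2 ≤ k) (a : ℕ) :
    StrictMono (Ack k a) ∧ ∀ x, x < Ack k a x := by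
  induction a with
  | zero =>
    constructor
    · intro x y h
      simp only [Ack]
      exact Nat.pow_lt_pow_right (by omega) h
    · intro x
      simp only [Ack]
      exact Nat.lt_pow_self (by omega)
  | succ a ih =>
    have hg : ∀ x, x < (Ack k a)^[k] x := fun x => by
      have := iter_gt _ ih.2 k x
      omega
    constructor
    · apply strictMono_nat_of_lt_succ
      intro x
      simp only [Ack]
      rw [Function.iterate_succ_apply' _ (x+1)]
      exact hg _
    · intro x
      simp only [Ack]
      have := iter_gt _ hg (x+1) 1
      omega

theorem ack_mono (k : ℕ) (hk : 2 ≤ k) (a : ℕ) : StrictMono (Ack k a) := (ack_aux k hk a).1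

theorem ack_gt (k : ℕ) (hk : 2 ≤ k) (a x : ℕ) : x < Ack k a x := (ack_aux k hk a).2 x

theorem ack_range_succ (k : ℕ) (hk : 2 ≤ k) (a x : ℕ) :
    ∃ y, x < y ∧ Ack k (a + 1) x = Ack k a y := by
  obtain ⟨k', rfl⟩ : ∃ k', k = k' + 1 := ⟨k - 1, by omega⟩
  rw [ack_succ_eq, Function.iterate_succ_apply']
  refine ⟨_, ?_, rfl⟩
  have h1 := iter_gt _ (ack_gt (k'+1) hk a) k' (((Ack (k'+1) a)^[k'+1])^[x] 1)
  have h2 := iter_gt ((Ack (k'+1) a)^[k'+1]) (fun x => by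
      have := iter_gt _ (ack_gt (k'+1) hk a) (k'+1) x
      omega) x 1
  omega

theorem ack_range (k : ℕ) (hk : 2 ≤ k) (a n x : ℕ) : ∃ y, Ack k (a + n) x = Ack k a y := by
  induction n generalizing x with
  | zero => exact ⟨x, rfl⟩
  | succ n ih =>
    obtain ⟨y, _, hy⟩ := ack_range_succ k hk (a + n) x
    obtain ⟨z, hz⟩ := ih y
    exact ⟨z, by rw [← add_assoc, hy, hz]⟩

theorem ack_idx (k : ℕ) (hk : 2 ≤ k) (x : ℕ) : StrictMono (fun a => Ack k a x) := by
  apply strictMono_nat_of_lt_succ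
  intro a
  obtain ⟨y, h, hy⟩ := ack_range_succ k hk a x
  simp only [hy]
  exact ack_mono k hk a h

theorem ack_jump (k : ℕ) (hk : 2 ≤ k) (a c b x m : ℕ) (hac : a ≤ c)
    (h1 : Ack k a b ≤ m) (h2 : m < Ack k c x) : Ack k a (b + 1) ≤ Ack k c x := by
  obtain ⟨n, rfl⟩ := Nat.exists_eq_add_of_le hac
  obtain ⟨y, hy⟩ := ack_range k hk a n x
  rw [hy] at h2 ⊢
  exact (ack_mono k hk a).monotone ((ack_mono k hk a).lt_iff_lt.1 (h1.trans_lt h2))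

theorem bracket (f : ℕ → ℕ) (hf : StrictMono f) (m : ℕ) (h0 : f 0 ≤ m) :
    ∃ a, f a ≤ m ∧ m < f (a + 1) := by
  have hex : ∃ a, m < f (a + 1) := ⟨m, by have := hf.id_le (m+1); simp at this; omega⟩
  classical
  refine ⟨Nat.find hex, ?_, Nat.find_spec hex⟩
  rcases hn : Nat.find hex with _ | n
  · exact h0
  · exact not_lt.1 (Nat.find_min hex (m := n) (by omega))

/-- Sandwich without the halting condition. -/
structure PSand (k m n : ℕ) (a b ms : ℕ → ℕ) : Prop where
  ms_zero : ms 0 = 0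
  idx_lo : ∀ i < n, Ack k (a (i + 1)) (ms i) ≤ m
  idx_hi : ∀ i < n, m < Ack k (a (i + 1) + 1) (ms i)
  arg_lo : ∀ i < n, Ack k (a (i + 1)) (b (i + 1)) ≤ m
  arg_hi : ∀ i < n, m < Ack k (a (i + 1)) (b (i + 1) + 1)
  ms_succ : ∀ i < n, ms (i + 1) = Ack k (a (i + 1)) (b (i + 1))

theorem PSand.toS {k m n : ℕ} {a b ms : ℕ → ℕ} (h : PSand k m n a b ms)
    (hh : m < Ack k 0 (ms n)) : IsSandwich k m n a b ms :=
  ⟨h.1, h.2, h.3, h.4, h.5, h.6, hh⟩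

theorem PSand.step {k m n : ℕ} {a b ms : ℕ → ℕ} (hk : 2 ≤ k) (h : PSand k m n a b ms)
    (hh : Ack k 0 (ms n) ≤ m) : ∃ d e ws, PSand k m (n + 1) d e ws ∧
      (∀ i ≤ n, ws i = ms i ∧ d i = a i ∧ e i = b i) ∧ ms n < ws (n + 1) := by
  obtain ⟨c, hc1, hc2⟩ := bracket _ (ack_idx k hk (ms n)) m hh
  obtain ⟨x, hx1, hx2⟩ := bracket _ (ack_mono k hk c) m
    (((ack_mono k hk c).monotone (Nat.zero_le _)).trans hc1)
  have hlt : ms n < Ack k c x := by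
    have := (ack_mono k hk c).lt_iff_lt.1 (hc1.trans_lt hx2)
    have := ack_gt k hk c x
    omega
  have key : ∀ i < n + 1, i < n ∨ i = n := fun i hi => by omega
  have e1 : ∀ (f : ℕ → ℕ) (v i : ℕ), i ≤ n → Function.update f (n+1) v i = f i :=
    fun f v i hi => Function.update_of_ne (by omega) _ _
  refine ⟨Function.update a (n+1) c, Function.update b (n+1) x,
    Function.update ms (n+1) (Ack k c x), ⟨?_, ?_, ?_, ?_, ?_, ?_⟩, ?_, ?_⟩
  · rw [e1 _ _ _ (Nat.zero_le _)]; exact h.1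
  · intro i hi
    rcases key i hi with hi | rfl
    · rw [e1 _ _ _ hi, e1 _ _ _ hi.le]; exact h.2 i hi
    · rw [e1 _ _ _ le_rfl, Function.update_self]; exact hc1
  · intro i hi
    rcases key i hi with hi | rfl
    · rw [e1 _ _ _ hi, e1 _ _ _ hi.le]; exact h.3 i hi
    · rw [e1 _ _ _ le_rfl, Function.update_self]; exact hc2
  · intro i hi
    rcases key i hi with hi | rfl
    · rw [e1 _ _ _ hi, e1 _ _ _ hi]; exact h.4 i hi
    · rw [Function.update_self, Function.update_self]; exact hx1
  · intro i hi
    rcases key i hi with hi | rfl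
    · rw [e1 _ _ _ hi, e1 _ _ _ hi]; exact h.5 i hi
    · rw [Function.update_self, Function.update_self]; exact hx2
  · intro i hi
    rcases key i hi with hi | rfl
    · rw [e1 _ _ _ hi, e1 _ _ _ hi, e1 _ _ _ hi]; exact h.6 i hi
    · rw [Function.update_self, Function.update_self, Function.update_self]
  · intro i hi
    exact ⟨e1 _ _ _ hi, e1 _ _ _ hi, e1 _ _ _ hi⟩
  · rw [Function.update_self]; exact hlt

theorem PSand.extend {k m : ℕ} (hk : 2 ≤ k) (N : ℕ) : ∀ (n : ℕ) (a b ms : ℕ → ℕ),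
    PSand k m n a b ms → m - ms n ≤ N → ∃ r d e ws, n ≤ r ∧ IsSandwich k m r d e ws ∧
      (∀ i ≤ n, ws i = ms i ∧ d i = a i ∧ e i = b i) := by
  induction N with
  | zero =>
    intro n a b ms h hN
    have := ack_gt k hk 0 (ms n)
    exact ⟨n, a, b, ms, le_rfl, h.toS (by omega), fun i _ => ⟨rfl, rfl, rfl⟩⟩
  | succ N ih =>
    intro n a b ms h hN
    by_cases hh : m < Ack k 0 (ms n)
    · exact ⟨n, a, b, ms, le_rfl, h.toS hh, fun i _ => ⟨rfl, rfl, rfl⟩⟩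
    · obtain ⟨d, e, ws, hp, hag, hlt⟩ := h.step hk (not_lt.1 hh)
      obtain ⟨r, d', e', ws', hr, hs, hag'⟩ := ih _ _ _ _ hp (by omega)
      refine ⟨r, d', e', ws', by omega, hs, fun i hi => ?_⟩
      have h1 := hag i hi
      have h2 := hag' i (by omega)
      exact ⟨h2.1.trans h1.1, h2.2.1.trans h1.2.1, h2.2.2.trans h1.2.2⟩

theorem psand_of {k m n j w : ℕ} {a b ms : ℕ → ℕ} (hk : 2 ≤ k)
    (hs : IsSandwich k m n a b ms) (hj1 : 1 ≤ j) (hjn : j ≤ n)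
    (hw1 : Ack k (a j) (b j) ≤ w) (hw2 : w < Ack k (a j) (b j + 1)) :
    PSand k w j a b ms := by
  have hb : ∀ i < n, Ack k (a (i+1)) (ms i) ≤ ms (i+1) := fun i hi => by
    rw [hs.ms_succ i hi]
    have := (ack_mono k hk _).lt_iff_lt.1 ((hs.idx_lo i hi).trans_lt (hs.arg_hi i hi))
    exact (ack_mono k hk _).monotone (by omega)
  have hmono : ∀ i < n, ms i < ms (i+1) := fun i hi =>
    (ack_gt k hk _ _).trans_le (hb i hi)
  have hle : ∀ i' i, i ≤ i' → i' ≤ n → ms i ≤ ms i' := by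
    intro i' i h
    induction i', h using Nat.le_induction with
    | base => intro _; exact le_rfl
    | succ p hp ih =>
      intro hpn
      exact (ih (by omega)).trans (hmono p (by omega)).le
  have hdec : ∀ i, i + 1 < n → a (i+2) < a (i+1) := fun i hi => by
    have h1 := hs.idx_lo (i+1) hi
    have h2 := hs.arg_hi i (by omega)
    have h3 : Ack k (a (i+1)) (b (i+1) + 1) ≤ Ack k (a (i+1)) (ms (i+1)) := by
      apply (ack_mono k hk _).monotone
      rw [hs.ms_succ i (by omega)]
      exact ack_gt k hk _ _
    exact (ack_idx k hk (ms (i+1))).lt_iff_lt.1 (h1.trans_lt (h2.trans_le h3))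
  have hale : ∀ i' i, i ≤ i' → i' < n → a (i'+1) ≤ a (i+1) := by
    intro i' i h
    induction i', h using Nat.le_induction with
    | base => intro _; exact le_rfl
    | succ p hp ih =>
      intro hpn
      exact (hdec p hpn).le.trans (ih (by omega))
  obtain ⟨q, rfl⟩ : ∃ q, j = q + 1 := ⟨j - 1, by omega⟩
  have hlo : ∀ i < q + 1, ms (i+1) ≤ w := fun i hi => by
    refine (hle (q+1) (i+1) (by omega) hjn).trans ?_
    rw [hs.ms_succ q (by omega)]
    exact hw1
  have hq := hs.arg_lo q (by omega)
  refine ⟨hs.ms_zero, fun i hi => (hb i (by omega)).trans (hlo i hi), fun i hi => ?_,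
    fun i hi => ?_, fun i hi => ?_, fun i hi => hs.ms_succ i (by omega)⟩
  · have := hale q i (by omega) (by omega)
    exact hw2.trans_le (ack_jump k hk _ _ _ _ m (by omega) hq (hs.idx_hi i (by omega)))
  · rw [← hs.ms_succ i (by omega)]; exact hlo i hi
  · have := hale q i (by omega) (by omega)
    exact hw2.trans_le (ack_jump k hk _ _ _ _ m (by omega) hq (hs.arg_hi i (by omega)))


theorem stmt_3 (k m n j w : ℕ) (a b ms : ℕ → ℕ) (hk : 2 ≤ k) (hm : 0 < m)
    (hs : IsSandwich k m n a b ms) (hj1 : 1 ≤ j) (hjn : j ≤ n)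
    (hw1 : Ack k (a j) (b j) ≤ w) (hw2 : w < Ack k (a j) (b j + 1)) :
    (∃ r d e ws, j ≤ r ∧ IsSandwich k w r d e ws ∧ (∀ i ≤ j, ws i = ms i) ∧
        ∀ i, 1 ≤ i → i ≤ j → d i = a i ∧ e i = b i) ∧
      (w < Ack k 0 (ms j) →
        (∃ d e ws, IsSandwich k w j d e ws ∧ (∀ i ≤ j, ws i = ms i) ∧
            ∀ i, 1 ≤ i → i ≤ j → d i = a i ∧ e i = b i) ∧
          NF k w (a j) (b j) (w - Ack k (a j) (b j))) := by

  have hp := psand_of hk hs hj1 hjn hw1 hw2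
  refine ⟨?_, fun hh => ?_⟩
  · obtain ⟨r, d, e, ws, hr, h, hag⟩ := PSand.extend hk _ _ _ _ _ hp le_rfl
    exact ⟨r, d, e, ws, hr, h, fun i hi => (hag i hi).1, fun i _ hi => (hag i hi).2⟩
  · refine ⟨⟨a, b, ms, hp.toS hh, fun _ _ => rfl, fun _ _ _ => ⟨rfl, rfl⟩⟩, by omega, ?_⟩
    exact ⟨j, a, b, ms, hj1, hp.toS hh, rfl, rfl⟩
end

section
/- If n < m are natural numbers and 1 < k ≤ ℓ are natural numbers, then ⟨k→ℓ⟩n < ⟨k→ℓ⟩m; in particular, the base-change map x ↦ ⟨k→ℓ⟩x is strictly increasing on ℕ. -/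
/-- `BCH k l m v` is the graph of the base-change operation `⟨k→l⟩`:
`⟨k→l⟩0 = 0` and, for `m ≡_k A_a(k, b) + c`,
`⟨k→l⟩m = A_{⟨k→l⟩a}(l, ⟨k→l⟩b) + ⟨k→l⟩c`. -/
inductive BCH (k l : ℕ) : ℕ → ℕ → Prop
  | zero : BCH k l 0 0
  | step (m a b c a' b' c' : ℕ) : NF k m a b c →
      BCH k l a a' → BCH k l b b' → BCH k l c c' →
      BCH k l m (Ack l a' b' + c')

section helpers

theorem akf_zero (k b : ℕ) : Ack k 0 b = k ^ b := by simp [Ack]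

theorem akf_succ (k a b : ℕ) : Ack k (a + 1) b = (Ack k a)^[k * (b + 1)] 1 := by
  rw [Function.iterate_mul]; simp [Ack]

theorem akf_basic {k : ℕ} (hk : 1 < k) (a : ℕ) :
    StrictMono (Ack k a) ∧ ∀ x, x < Ack k a x := by
  induction a with
  | zero =>
    constructor
    · intro x y h
      simp only [akf_zero]
      exact Nat.pow_lt_pow_right hk h
    · intro x
      rw [akf_zero]
      exact Nat.lt_pow_self hk
  | succ a ih =>
    obtain ⟨h1, h2⟩ := ih
    have hs : StrictMono (Ack k (a + 1)) := by
      intro x y h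
      rw [akf_succ, akf_succ]
      have : StrictMono (fun n => (Ack k a)^[n] 1) := by
        apply strictMono_nat_of_lt_succ
        intro n
        rw [Function.iterate_succ_apply']
        exact h2 _
      apply this
      apply Nat.mul_lt_mul_of_pos_left <;> omega
    refine ⟨hs, fun x => ?_⟩
    have h0 : 0 < Ack k (a + 1) 0 := by
      rw [akf_succ]
      have : k * (0 + 1) = (k - 1) + 1 := by omega
      rw [this, Function.iterate_succ_apply']
      exact lt_of_le_of_lt (Nat.zero_le _) (h2 _)
    induction x with
    | zero => exact h0
    | succ x ihx => have := hs (Nat.lt_succ_self x); simp only [Nat.succ_eq_add_one] at this; omega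

theorem akf_sm {k : ℕ} (hk : 1 < k) (a : ℕ) : StrictMono (Ack k a) := (akf_basic hk a).1
theorem lt_ack {k : ℕ} (hk : 1 < k) (a x : ℕ) : x < Ack k a x := (akf_basic hk a).2 x

theorem iter_sm {k : ℕ} (hk : 1 < k) (a s : ℕ) : StrictMono (fun n => (Ack k a)^[n] s) := by
  apply strictMono_nat_of_lt_succ
  intro n
  rw [Function.iterate_succ_apply']
  exact lt_ack hk _ _

theorem iter_ge {k : ℕ} (hk : 1 < k) (a s n : ℕ) : s + n ≤ (Ack k a)^[n] s := by
  induction n with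
  | zero => simp
  | succ n ih =>
    rw [Function.iterate_succ_apply']
    have := lt_ack hk a ((Ack k a)^[n] s)
    omega

theorem akf_succ_pred {k : ℕ} (hk : 1 < k) (a b : ℕ) :
    Ack k (a + 1) b = Ack k a ((Ack k a)^[k * (b + 1) - 1] 1) := by
  rw [akf_succ, ← Function.iterate_succ_apply' (Ack k a)]
  congr 1
  have : 1 ≤ k * (b + 1) := Nat.mul_pos (by omega) (by omega)
  congr 1
  omega

theorem akf_lt_succ {k : ℕ} (hk : 1 < k) (a x : ℕ) : Ack k a x < Ack k (a + 1) x := by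
  rw [akf_succ_pred hk]
  apply akf_sm hk
  have h1 := iter_ge hk a 1 (k * (x + 1) - 1)
  have h2 : x + 1 ≤ k * (x + 1) := Nat.le_mul_of_pos_left _ (by omega)
  omega

theorem akf_sm_left {k : ℕ} (hk : 1 < k) (x : ℕ) : StrictMono (fun a => Ack k a x) :=
  strictMono_nat_of_lt_succ (fun a => akf_lt_succ hk a x)

theorem idx_lt_ack {k : ℕ} (hk : 1 < k) (a x : ℕ) : a < Ack k a x := by
  induction a with
  | zero => rw [akf_zero]; positivity
  | succ a ih => have := akf_lt_succ hk a x; omega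

theorem akf_pos {k : ℕ} (hk : 1 < k) (a x : ℕ) : 0 < Ack k a x :=
  lt_of_le_of_lt (Nat.zero_le _) (lt_ack hk a x)

theorem akf_range {k : ℕ} (hk : 1 < k) (a p q : ℕ) (h : a < p) : ∃ t, Ack k p q = Ack k a t := by
  induction p generalizing q with
  | zero => omega
  | succ p ih =>
    rw [akf_succ_pred hk]
    rcases Nat.lt_succ_iff_lt_or_eq.mp h with h | h
    · exact ih _ h
    · subst h; exact ⟨_, rfl⟩

theorem akf_add {k : ℕ} (a t u : ℕ) (h : t ≤ u) :
    Ack k (a + 1) u = (Ack k a)^[k * (u - t)] (Ack k (a + 1) t) := by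
  rw [akf_succ, akf_succ, ← Function.iterate_add_apply, ← Nat.mul_add]
  congr 2
  omega

theorem akf_mul_le {k : ℕ} (hk : 1 < k) (a t : ℕ) : k * t ≤ Ack k (a + 1) t := by
  rw [akf_succ]
  have := iter_ge hk a 1 (k * (t + 1))
  have h : k * (t + 1) = k * t + k := by ring
  omega

theorem iter_mono_left {k : ℕ} (hk : 1 < k) {a b : ℕ} (h : a ≤ b) (n x : ℕ) :
    (Ack k a)^[n] x ≤ (Ack k b)^[n] x := by
  induction n with
  | zero => simp
  | succ n ih =>
    rw [Function.iterate_succ_apply', Function.iterate_succ_apply']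
    exact ((akf_sm hk a).monotone ih).trans ((akf_sm_left hk _).monotone h)

/-- Indexed reachability in the sandwiching sequence. -/
inductive RN (k m : ℕ) : ℕ → ℕ → ℕ → Prop
  | first (a b : ℕ) : Ack k a 0 ≤ m → m < Ack k (a + 1) 0 → Ack k a b ≤ m →
      m < Ack k a (b + 1) → RN k m 0 a b
  | next (n p q a b : ℕ) : RN k m n p q → Ack k a (Ack k p q) ≤ m →
      m < Ack k (a + 1) (Ack k p q) → Ack k a b ≤ m →
      m < Ack k a (b + 1) → RN k m (n + 1) a b

theorem RN.lo {k m n a b : ℕ} (h : RN k m n a b) : Ack k a b ≤ m := by cases h <;> assumption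
theorem RN.hi {k m n a b : ℕ} (h : RN k m n a b) : m < Ack k a (b + 1) := by cases h <;> assumption

theorem RN.down {k m n a b v : ℕ} (hk : 1 < k) (h : RN k m n a b) (h1 : Ack k a b ≤ v)
    (h2 : v ≤ m) : RN k v n a b := by
  induction h with
  | first a b e1 e2 e3 e4 =>
    refine RN.first a b ?_ (by omega) h1 (by omega)
    exact ((akf_sm hk a).monotone (Nat.zero_le b)).trans h1
  | next n p q a b hr e1 e2 e3 e4 ih =>
    have hs : Ack k p q ≤ b := by
      have := (akf_sm hk a).lt_iff_lt.mp (lt_of_le_of_lt e1 e4)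
      omega
    have h3 : Ack k a (Ack k p q) ≤ v := ((akf_sm hk a).monotone hs).trans h1
    exact RN.next n p q a b (ih ((lt_ack hk a _).le.trans h3)) h3 (by omega) h1 (by omega)

theorem next_lt {k m n p q a : ℕ} (hk : 1 < k) (h : RN k m n p q)
    (h1 : Ack k a (Ack k p q) ≤ m) : a < p := by
  by_contra hc
  push Not at hc
  have h2 := h.hi
  have h3 : Ack k p (Ack k p q) ≤ Ack k a (Ack k p q) := (akf_sm_left hk _).monotone hc
  have h4 : Ack k p (q + 1) ≤ Ack k p (Ack k p q) := (akf_sm hk p).monotone (lt_ack hk p q)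
  omega

theorem sq_unique {f : ℕ → ℕ} (hf : StrictMono f) {m a b : ℕ} (h1 : f a ≤ m) (h2 : m < f (a + 1))
    (h3 : f b ≤ m) (h4 : m < f (b + 1)) : a = b := by
  have := hf.lt_iff_lt.mp (lt_of_le_of_lt h1 h4)
  have := hf.lt_iff_lt.mp (lt_of_le_of_lt h3 h2)
  omega

theorem RN.unique {k m n a b p q : ℕ} (hk : 1 < k) (h : RN k m n a b) (h' : RN k m n p q) :
    a = p ∧ b = q := by
  induction n generalizing a b p q with
  | zero =>
    cases h with
    | first _ _ e1 e2 e3 e4 =>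
    cases h' with
    | first _ _ g1 g2 g3 g4 =>
    have : a = p := sq_unique (akf_sm_left hk 0) e1 e2 g1 g2
    subst this
    exact ⟨rfl, sq_unique (akf_sm hk a) e3 e4 g3 g4⟩
  | succ n ih =>
    cases h with
    | next _ p1 q1 _ _ hr e1 e2 e3 e4 =>
    cases h' with
    | next _ p2 q2 _ _ hr' g1 g2 g3 g4 =>
    obtain ⟨rfl, rfl⟩ := ih hr hr'
    have : a = p := sq_unique (akf_sm_left hk _) e1 e2 g1 g2
    subst this
    exact ⟨rfl, sq_unique (akf_sm hk a) e3 e4 g3 g4⟩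

theorem RN.earlier {k m n a b i : ℕ} (hk : 1 < k) (h : RN k m n a b) (hi : i < n) :
    ∃ p q, RN k m i p q ∧ Ack k 0 (Ack k p q) ≤ m := by
  induction h with
  | first => omega
  | next n p q a b hr e1 e2 e3 e4 ih =>
    rcases Nat.lt_succ_iff_lt_or_eq.mp hi with h | h
    · exact ih h
    · subst h
      exact ⟨p, q, hr, ((akf_sm_left hk _).monotone (Nat.zero_le a)).trans e1⟩

/-- Normal forms through `RN`. -/
def NF2 (k m a b c : ℕ) : Prop :=
  m = Ack k a b + c ∧ (∃ n, RN k m n a b) ∧ m < Ack k 0 (Ack k a b)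

theorem NF2.unique {k m a b c p q r : ℕ} (hk : 1 < k) (h : NF2 k m a b c) (h' : NF2 k m p q r) :
    a = p ∧ b = q ∧ c = r := by
  obtain ⟨e1, ⟨n, hn⟩, e2⟩ := h
  obtain ⟨g1, ⟨n', hn'⟩, g2⟩ := h'
  have hnn : n = n' := by
    rcases lt_trichotomy n n' with h | h | h
    · obtain ⟨x, y, hx, hy⟩ := hn'.earlier hk h
      obtain ⟨rfl, rfl⟩ := hx.unique hk hn
      omega
    · exact h
    · obtain ⟨x, y, hx, hy⟩ := hn.earlier hk h
      obtain ⟨rfl, rfl⟩ := hx.unique hk hn'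
      omega
  subst hnn
  obtain ⟨rfl, rfl⟩ := hn.unique hk hn'
  exact ⟨rfl, rfl, by omega⟩

theorem NF.to2 {k m a b c : ℕ} (h : NF k m a b c) : NF2 k m a b c := by
  obtain ⟨h1, n, as, bs, ms, hn, hs, rfl, rfl⟩ := h
  have key : ∀ i < n, RN k m i (as (i + 1)) (bs (i + 1)) := by
    intro i
    induction i with
    | zero =>
      intro h
      have e1 := hs.idx_lo 0 h
      have e2 := hs.idx_hi 0 h
      rw [hs.ms_zero] at e1 e2
      exact RN.first _ _ e1 e2 (hs.arg_lo 0 h) (hs.arg_hi 0 h)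
    | succ i ih =>
      intro h
      have hr := ih (by omega)
      have e1 := hs.idx_lo _ h
      have e2 := hs.idx_hi _ h
      rw [hs.ms_succ i (by omega)] at e1 e2
      exact RN.next _ _ _ _ _ hr e1 e2 (hs.arg_lo _ h) (hs.arg_hi _ h)
  obtain ⟨i, rfl⟩ : ∃ i, n = i + 1 := ⟨n - 1, by omega⟩
  refine ⟨h1, ⟨i, key i (by omega)⟩, ?_⟩
  have := hs.halt
  rwa [hs.ms_succ i (by omega)] at this

theorem exists_sq {f : ℕ → ℕ} (hf : StrictMono f) {m : ℕ} (h : f 0 ≤ m) :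
    ∃ a, f a ≤ m ∧ m < f (a + 1) := by
  have hex : ∃ a, m < f a := ⟨m + 1, lt_of_lt_of_le (Nat.lt_succ_self m) hf.le_apply⟩
  have h1 := Nat.find_spec hex
  obtain ⟨x, hx⟩ : ∃ x, Nat.find hex = x + 1 := by
    refine ⟨Nat.find hex - 1, ?_⟩
    have : Nat.find hex ≠ 0 := by
      intro h0; rw [h0] at h1; omega
    omega
  refine ⟨x, ?_, hx ▸ h1⟩
  have := Nat.find_min hex (m := x) (by omega)
  omega

theorem NF2.exists {k m : ℕ} (hk : 1 < k) (hm : 0 < m) : ∃ a b c, NF2 k m a b c := by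
  have step : ∀ a n b, RN k m n a b → ∃ a b c, NF2 k m a b c := by
    intro a
    induction a using Nat.strong_induction_on with
    | _ a ih =>
    intro n b h
    by_cases hh : m < Ack k 0 (Ack k a b)
    · exact ⟨a, b, m - Ack k a b, by have := h.lo; omega, ⟨n, h⟩, hh⟩
    · push Not at hh
      obtain ⟨p, e1, e2⟩ := exists_sq (akf_sm_left hk (Ack k a b)) hh
      have e0 : Ack k p 0 ≤ m := ((akf_sm hk p).monotone (Nat.zero_le _)).trans e1
      obtain ⟨q, e3, e4⟩ := exists_sq (akf_sm hk p) e0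
      exact ih p (next_lt hk h e1) _ q (RN.next _ _ _ _ _ h e1 e2 e3 e4)
  obtain ⟨p, e1, e2⟩ := exists_sq (akf_sm_left hk 0) (m := m) (by simp only [akf_zero, pow_zero]; omega)
  obtain ⟨q, e3, e4⟩ := exists_sq (akf_sm hk p) e1
  exact step p _ q (RN.first _ _ e1 e2 e3 e4)

theorem NF2.lts {k m a b c : ℕ} (hk : 1 < k) (h : NF2 k m a b c) : a < m ∧ b < m ∧ c < m := by
  have h1 := h.1
  have := idx_lt_ack hk a b
  have := lt_ack hk a b
  omega

theorem nf_of {k n a b w : ℕ} (h : RN k w n a b) (h2 : w < Ack k 0 (Ack k a b)) :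
    NF2 k w a b (w - Ack k a b) := ⟨by have := h.lo; omega, ⟨n, h⟩, h2⟩

theorem nf_self {k n a b : ℕ} (hk : 1 < k) (h : RN k (Ack k a b) n a b) :
    NF2 k (Ack k a b) a b 0 := ⟨by omega, ⟨n, h⟩, lt_ack hk _ _⟩

open Classical in
/-- The base change as a function. -/
noncomputable def bc (k l : ℕ) (m : ℕ) : ℕ :=
  if h : ∃ t : ℕ × ℕ × ℕ, NF2 k m t.1 t.2.1 t.2.2 ∧ t.1 < m ∧ t.2.1 < m ∧ t.2.2 < m then
    Ack l (bc k l h.choose.1) (bc k l h.choose.2.1) + bc k l h.choose.2.2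
  else 0
termination_by m
decreasing_by
  · exact h.choose_spec.2.1
  · exact h.choose_spec.2.2.1
  · exact h.choose_spec.2.2.2

theorem bc_zero {k l : ℕ} : bc k l 0 = 0 := by
  rw [bc, dif_neg]
  rintro ⟨t, _, h, _⟩
  omega

theorem bc_nf {k l m a b c : ℕ} (hk : 1 < k) (h : NF2 k m a b c) :
    bc k l m = Ack l (bc k l a) (bc k l b) + bc k l c := by
  have hex : ∃ t : ℕ × ℕ × ℕ, NF2 k m t.1 t.2.1 t.2.2 ∧ t.1 < m ∧ t.2.1 < m ∧ t.2.2 < m :=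
    ⟨(a, b, c), h, h.lts hk⟩
  rw [bc, dif_pos hex]
  obtain ⟨e1, e2, e3⟩ := hex.choose_spec.1.unique hk h
  rw [e1, e2, e3]

theorem bch_eq {k l m v : ℕ} (hk : 1 < k) (h : BCH k l m v) : v = bc k l m := by
  induction h with
  | zero => exact bc_zero.symm
  | step m a b c a' b' c' hn _ _ _ i1 i2 i3 => rw [bc_nf hk hn.to2, i1, i2, i3]

theorem bch_id {k m v : ℕ} (h : BCH k k m v) : v = m := by
  induction h with
  | zero => rfl
  | step m a b c a' b' c' hn _ _ _ i1 i2 i3 => rw [i1, i2, i3, hn.1]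

theorem bc_one {k l : ℕ} (hk : 1 < k) : bc k l 1 = 1 := by
  have e1 : Ack k 0 0 = 1 := by simp [akf_zero]
  have : NF2 k 1 0 0 0 := by
    have h := nf_self (k := k) (a := 0) (b := 0) (n := 0) hk
      (RN.first _ _ le_rfl (akf_lt_succ hk 0 0) le_rfl (akf_sm hk 0 (by omega)))
    rwa [e1] at h
  rw [bc_nf hk this, bc_zero]
  simp [akf_zero]

/-- Multiples. -/
theorem mul_lemma {k l a b s M : ℕ} (hk : 1 < k) (hs : s = Ack k a b) (hM : 1 ≤ M)
    (hR : ∃ n, RN k (s * M - 1) n a b) (hh : s * M - 1 < Ack k 0 s) 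
    (hlt : bc k l (s - 1) < bc k l s) (hM2 : 2 ≤ M) : bc k l (s * M - 1) < M * bc k l s := by
  have hspos : 0 < s := hs ▸ akf_pos hk a b
  obtain ⟨n, hR⟩ := hR
  have hsM : s * 2 ≤ s * M := Nat.mul_le_mul_left _ hM2
  have hnf : ∀ w, s ≤ w → w ≤ s * M - 1 → NF2 k w a b (w - s) := by
    intro w h1 h2
    have := nf_of (hR.down hk (v := w) (hs ▸ h1) h2) (by rw [← hs]; omega)
    rwa [← hs] at this
  have hse : bc k l s = Ack l (bc k l a) (bc k l b) := by
    rw [bc_nf hk (hnf s le_rfl (by omega)), Nat.sub_self, bc_zero, add_zero]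
  have key : ∀ i, i + 1 ≤ M → bc k l (s * (i + 1) - 1) = i * bc k l s + bc k l (s - 1) := by
    intro i
    induction i with
    | zero => simp
    | succ i ih =>
      intro hi
      have g1 : s * (i + 1 + 1) ≤ s * M := Nat.mul_le_mul_left _ hi
      have g2 : s * (i + 1 + 1) = s * (i + 1) + s := by ring
      have g3 : s * (i + 1) = s * i + s := by ring
      rw [bc_nf hk (hnf (s * (i + 1 + 1) - 1) (by omega) (by omega))]
      have : s * (i + 1 + 1) - 1 - s = s * (i + 1) - 1 := by omega
      rw [this, ih (by omega), ← hse]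
      ring
  obtain ⟨i, rfl⟩ : ∃ i, M = i + 1 := ⟨M - 1, by omega⟩
  rw [key i le_rfl]
  have : (i + 1) * bc k l s = i * bc k l s + bc k l s := by ring
  omega

/-- Statement of lemma B at level `j`. -/
def LB (k l m j : ℕ) : Prop := ∀ x, m = Ack k j (x + 1) → (∃ n, RN k (m - 1) n j x) →
  bc k l (m - 1) < Ack l (bc k l j) (bc k l x + 1)

theorem lemC {k l m j s N : ℕ} (hk : 1 < k) (hl : 1 < l)
    (hmono : ∀ x y, x < y → y < m → bc k l x < bc k l y)
    (hB : LB k l m j) (hN : 2 ≤ N) (hm : m = (Ack k j)^[N] s)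
    (H : ∀ w b, Ack k j s ≤ w → w < m → Ack k j b ≤ w → w < Ack k j (b + 1) →
      ∃ n, RN k w n j b) :
    bc k l (m - 1) < (Ack l (bc k l j))^[N] (bc k l s) := by
  have hit : ∀ i, i < N → bc k l ((Ack k j)^[i] s) = (Ack l (bc k l j))^[i] (bc k l s) := by
    intro i
    induction i with
    | zero => simp
    | succ i ih =>
      intro hi
      rw [Function.iterate_succ_apply', Function.iterate_succ_apply', ← ih (by omega)]
      have hlt : Ack k j ((Ack k j)^[i] s) < m := by
        rw [hm, ← Function.iterate_succ_apply' (Ack k j)]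
        exact iter_sm hk j s hi
      have hge : s ≤ (Ack k j)^[i] s := by have := iter_ge hk j s i; omega
      obtain ⟨n, hn⟩ := H _ ((Ack k j)^[i] s) ((akf_sm hk j).monotone hge) hlt le_rfl
        (akf_sm hk j (by omega))
      rw [bc_nf hk (nf_self hk hn), bc_zero, add_zero]
  obtain ⟨M, rfl⟩ : ∃ M, N = M + 2 := ⟨N - 2, by omega⟩
  have hge := iter_ge hk j s (M + 1)
  obtain ⟨x, hx⟩ : ∃ x, (Ack k j)^[M + 1] s = x + 1 := ⟨(Ack k j)^[M + 1] s - 1, by omega⟩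
  have hmx : m = Ack k j (x + 1) := by
    rw [hm, Function.iterate_succ_apply', hx]
  have hxm : Ack k j x < m := by rw [hmx]; exact akf_sm hk j (by omega)
  have hR : ∃ n, RN k (m - 1) n j x := by
    apply H
    · have : Ack k j s ≤ Ack k j x := (akf_sm hk j).monotone (by omega)
      omega
    · omega
    · omega
    · rw [← hmx]; omega
  have h1 := hB x hmx hR
  rw [Function.iterate_succ_apply', ← hit (M + 1) (by omega), hx]
  refine lt_of_lt_of_le h1 ((akf_sm hl _).monotone ?_)
  apply hmono
  · omega
  · rw [hmx]; exact lt_ack hk _ _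

theorem lemB {k l m : ℕ} (hk : 1 < k) (hkl : k < l)
    (hmono : ∀ x y, x < y → y < m → bc k l x < bc k l y) (j : ℕ) : LB k l m j := by
  have hl : 1 < l := by omega
  induction j with
  | zero =>
    rintro x hm ⟨n, hn⟩
    have hx : Ack k 0 x < m := by rw [hm]; exact akf_sm hk 0 (by omega)
    have e : m = Ack k 0 x * k := by rw [hm, akf_zero, akf_zero, pow_succ]
    have hpos := akf_pos hk 0 x
    have hself : NF2 k (Ack k 0 x) 0 x 0 := nf_self hk (hn.down hk le_rfl (by omega))
    have h1 := mul_lemma (l := l) (M := k) hk rfl (by omega) ⟨n, e ▸ hn⟩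
      (by
        rw [← e]
        have : Ack k 0 (x + 1) ≤ Ack k 0 (Ack k 0 x) := (akf_sm hk 0).monotone (lt_ack hk 0 x)
        omega) (hmono _ _ (by omega) hx) (by omega)
    rw [← e, bc_nf hk hself, bc_zero, add_zero, akf_zero] at h1
    rw [bc_zero, akf_zero, pow_succ]
    refine lt_of_lt_of_le h1 ?_
    rw [mul_comm]
    exact Nat.mul_le_mul_left _ hkl.le
  | succ j ih =>
    rintro x hm ⟨n, hn⟩
    have hx : Ack k (j + 1) x < m := by rw [hm]; exact akf_sm hk _ (by omega)
    have hm2 : m = (Ack k j)^[k] (Ack k (j + 1) x) := by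
      rw [hm, akf_add j x (x + 1) (by omega)]; simp
    have hself : NF2 k (Ack k (j + 1) x) (j + 1) x 0 := nf_self hk (hn.down hk le_rfl (by omega))
    have hC := lemC hk hl hmono ih (by omega) hm2 (by
      intro w b h1 h2 h3 h4
      refine ⟨_, RN.next n (j + 1) x j b (hn.down hk ?_ (by omega)) h1 ?_ h3 h4⟩
      · exact (lt_ack hk _ _).le.trans h1
      · have : Ack k (j + 1) (x + 1) ≤ Ack k (j + 1) (Ack k (j + 1) x) :=
          (akf_sm hk _).monotone (lt_ack hk _ x)
        omega)
    refine lt_of_lt_of_le hC ?_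
    have hj : bc k l j < bc k l (j + 1) := by
      apply hmono _ _ (by omega)
      rw [hm]; exact idx_lt_ack hk _ _
    obtain ⟨D, hD⟩ : ∃ D, bc k l (j + 1) = D + 1 := ⟨bc k l (j + 1) - 1, by omega⟩
    rw [bc_nf hk hself, bc_zero, add_zero, hD, akf_add D (bc k l x) (bc k l x + 1) (by omega)]
    have : bc k l x + 1 - bc k l x = 1 := by omega
    rw [this, mul_one]
    refine (iter_mono_left hl (show bc k l j ≤ D by omega) _ _).trans ?_
    exact (iter_sm hl D _).monotone hkl.le

theorem main_step {k l m : ℕ} (hk : 1 < k) (hkl : k < l) (hm0 : 0 < m)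
    (hmono : ∀ x y, x < y → y < m → bc k l x < bc k l y) : bc k l (m - 1) < bc k l m := by
  have hl : 1 < l := by omega
  obtain ⟨d, e, c, hnf⟩ := NF2.exists hk hm0
  have hbm := bc_nf (l := l) hk hnf
  obtain ⟨hm, ⟨n, hn⟩, hh⟩ := hnf
  rcases Nat.eq_zero_or_pos c with hc | hc
  swap
  · have h1 : NF2 k (m - 1) d e (c - 1) :=
      ⟨by omega, ⟨n, hn.down hk (by omega) (by omega)⟩, by omega⟩
    rw [hbm, bc_nf hk h1]
    have := akf_pos hk d e
    have := hmono (c - 1) c (by omega) (by omega)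
    omega
  subst hc
  rw [add_zero] at hm
  rw [hbm, bc_zero, add_zero]
  have hem : e < m := by rw [hm]; exact lt_ack hk _ _
  have hdm : d < m := by rw [hm]; exact idx_lt_ack hk _ _
  -- the case of a successor argument
  have succ_case : ∀ x, e = x + 1 → (∃ n, RN k (m - 1) n d x) →
      bc k l (m - 1) < Ack l (bc k l d) (bc k l e) := by
    intro x hx hR
    have := lemB hk hkl hmono d x (by rw [hm, hx]) hR
    refine lt_of_lt_of_le this ((akf_sm hl _).monotone ?_)
    exact hmono _ _ (by omega) hem
  cases hn with
  | first _ _ e1 e2 e3 e4 =>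
    rcases Nat.eq_zero_or_pos e with he | he
    swap
    · obtain ⟨x, rfl⟩ : ∃ x, e = x + 1 := ⟨e - 1, by omega⟩
      have hx : Ack k d x < m := by rw [hm]; exact akf_sm hk _ (by omega)
      have hx0 : Ack k d 0 ≤ Ack k d x := (akf_sm hk d).monotone (by omega)
      exact succ_case x rfl ⟨0, RN.first _ _ (by omega) (by omega) (by omega) (by omega)⟩
    · subst he
      cases d with
      | zero =>
        rw [akf_zero] at hm
        simp only [pow_zero] at hm
        subst hm
        rw [Nat.sub_self, bc_zero]
        exact akf_pos hl _ _
      | succ j =>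
        have hm2 : m = (Ack k j)^[k] 1 := by rw [hm, akf_succ]; simp
        have hC := lemC hk hl hmono (lemB hk hkl hmono j) (by omega) hm2 (by
          intro w b h1 h2 h3 h4
          refine ⟨0, RN.first _ _ ?_ (by omega) h3 h4⟩
          exact ((akf_sm hk j).monotone (Nat.zero_le 1)).trans h1)
        refine lt_of_lt_of_le hC ?_
        have hj : bc k l j < bc k l (j + 1) := hmono _ _ (by omega) hdm
        obtain ⟨D, hD⟩ : ∃ D, bc k l (j + 1) = D + 1 := ⟨bc k l (j + 1) - 1, by omega⟩
        rw [bc_one hk, bc_zero, hD, akf_succ]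
        refine (iter_mono_left hl (show bc k l j ≤ D by omega) _ _).trans ?_
        apply (iter_sm hl D _).monotone
        omega
  | next n p q _ _ hr e1 e2 e3 e4 =>
    have hdp := next_lt hk hr e1
    have hse : Ack k p q ≤ e := by
      have := (akf_sm hk d).lt_iff_lt.mp (lt_of_le_of_lt e1 e4)
      omega
    rcases Nat.lt_or_ge (Ack k p q) e with he | he
    · obtain ⟨x, rfl⟩ : ∃ x, e = x + 1 := ⟨e - 1, by omega⟩
      have hx : Ack k d x < m := by rw [hm]; exact akf_sm hk _ (by omega)
      have hx0 : Ack k d (Ack k p q) ≤ Ack k d x := (akf_sm hk d).monotone (by omega)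
      exact succ_case x rfl ⟨n + 1, RN.next _ p q _ _ (hr.down hk (by omega) (by omega)) (by omega)
        (by omega) (by omega) (by omega)⟩
    obtain ⟨s, hs⟩ : ∃ s, s = Ack k p q := ⟨_, rfl⟩
    have hes : e = s := by omega
    subst hes
    have hself : NF2 k e p q 0 := by
      rw [hs]; exact nf_self hk (hr.down hk le_rfl (by omega))
    have hfs := bc_nf (l := l) hk hself
    rw [bc_zero, add_zero] at hfs
    have hpe : p < e := by rw [hs]; exact idx_lt_ack hk _ _
    have hfpd : bc k l d < bc k l p := hmono _ _ hdp (by omega)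
    have hself_le : ∀ x, x < m → x ≤ bc k l x := by
      intro x
      induction x with
      | zero => omega
      | succ x ih =>
        intro hx
        have := ih (by omega)
        have := hmono x (x + 1) (by omega) hx
        omega
    have hee := hself_le e hem
    cases d with
    | zero =>
      obtain ⟨t, ht⟩ := akf_range hk 0 p q hdp
      rw [← hs, akf_zero] at ht
      rw [akf_zero] at hm
      have hte : t < e := by rw [ht]; exact Nat.lt_pow_self hk
      have hme : m = e * k ^ (e - t) := by
        have : e = t + (e - t) := by omega
        conv_lhs => rw [hm, this, pow_add, ← ht]
      have hM2 : 2 ≤ k ^ (e - t) := by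
        have := Nat.pow_le_pow_right (n := k) (by omega) (show 1 ≤ e - t by omega)
        rw [pow_one] at this
        omega
      have hmul := mul_lemma (l := l) hk hs (by omega)
        ⟨n, hme ▸ (hr.down hk (v := m - 1) (by omega) (by omega))⟩
        (by rw [← hme, akf_zero]; omega) (hmono _ _ (by omega) hem) hM2
      rw [← hme] at hmul
      refine lt_of_lt_of_le hmul ?_
      rw [bc_zero, akf_zero]
      obtain ⟨u, hu⟩ : ∃ u, bc k l e = e + u := ⟨bc k l e - e, by omega⟩
      rw [hu]
      have he0 : 0 < e := by omega
      refine Nat.le_of_mul_le_mul_left ?_ he0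
      rw [← mul_assoc, ← hme, hm]
      have g1 : k ^ e ≤ l ^ e := Nat.pow_le_pow_left hkl.le e
      have g2 : u + 1 ≤ l ^ u := Nat.lt_pow_self hl
      have g3 : e + u ≤ e * (u + 1) := by nlinarith
      calc k ^ e * (e + u) ≤ l ^ e * (e * (l ^ u)) :=
            Nat.mul_le_mul g1 (g3.trans (Nat.mul_le_mul_left _ g2))
        _ = e * l ^ (e + u) := by rw [pow_add]; ring
    | succ j =>
      obtain ⟨t, ht⟩ := akf_range hk (j + 1) p q hdp
      rw [← hs] at ht
      have hte : t < e := by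
        have := lt_ack hk (j + 1) t
        omega
      have hm2 : m = (Ack k j)^[k * (e - t)] e := by
        rw [hm, akf_add j t e hte.le, ← ht]
      have hN : 2 ≤ k * (e - t) := by
        have : k * 1 ≤ k * (e - t) := Nat.mul_le_mul_left _ (by omega)
        omega
      have hC := lemC hk hl hmono (lemB hk hkl hmono j) hN hm2 (by
          intro w b h1 h2 h3 h4
          have := lt_ack hk j e
          refine ⟨n + 1, RN.next _ p q _ _ (hr.down hk (by omega) (by omega)) ?_ ?_ h3 h4⟩
          · rw [← hs]; exact h1
          · rw [← hs]; omega)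
      refine lt_of_lt_of_le hC ?_
      have hj : bc k l j < bc k l (j + 1) := hmono _ _ (by omega) hdm
      obtain ⟨D, hD⟩ : ∃ D, bc k l (j + 1) = D + 1 := ⟨bc k l (j + 1) - 1, by omega⟩
      obtain ⟨T, hT⟩ := akf_range hl _ _ (bc k l q) hfpd
      rw [← hfs, hD] at hT
      have hTe : T < bc k l e := by
        have := lt_ack hl (D + 1) T
        omega
      rw [hD, akf_add D T (bc k l e) hTe.le, ← hT]
      refine (iter_mono_left hl (show bc k l j ≤ D by omega) _ _).trans ?_
      apply (iter_sm hl D _).monotone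
      have g1 : l * T ≤ bc k l e := by rw [hT]; exact akf_mul_le hl D T
      have g2 : k * (e - t) ≤ k * bc k l e := Nat.mul_le_mul_left _ (by omega)
      have g3 : (k + 1) * bc k l e ≤ l * bc k l e := Nat.mul_le_mul_right _ hkl
      rw [Nat.mul_sub l]
      rw [add_mul] at g3
      omega

theorem bc_strictMono {k l : ℕ} (hk : 1 < k) (hkl : k < l) (m : ℕ) :
    ∀ n, n < m → bc k l n < bc k l m := by
  induction m using Nat.strong_induction_on with
  | _ m ih =>
  intro n hn
  have h1 := main_step hk hkl (by omega) (fun x y hxy hy => ih y hy x hxy)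
  rcases Nat.lt_or_ge n (m - 1) with h | h
  · exact (ih (m - 1) (by omega) n h).trans h1
  · have : n = m - 1 := by omega
    rw [this]; exact h1

end helpers

theorem stmt_16 (k l n m vn vm : ℕ) (hk : 1 < k) (hkl : k ≤ l) (hnm : n < m)
    (h1 : BCH k l n vn) (h2 : BCH k l m vm) : vn < vm := by
  rcases Nat.lt_or_ge k l with h | h
  · rw [bch_eq hk h1, bch_eq hk h2]
    exact bc_strictMono hk h m n hnm
  · obtain rfl : k = l := by omega
    rw [bch_id h1, bch_id h2]
    exact hnm
end
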